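/- For every quantum channel E on M_d(ℂ), the eigenvalue 1 of E is semisimple: ker((E − id) ∘ (E − id)) = ker(E − id); i.e., every X ∈ M_d(ℂ) with (E − id)((E − id)(X)) = 0 already satisfies E(X) = X. -/

import Mathlib

open Matrix Kronecker
open scoped ComplexOrder

/-- The Choi matrix of a linear map on `d × d` complex matrices. -/
noncomputable def ChoiMatrix {d : ℕ}
    (E : Matrix (Fin d) (Fin d) ℂ →ₗ[ℂ] Matrix (Fin d) (Fin d) ℂ) :
    Matrix (Fin d × Fin d) (Fin d × Fin d) ℂ :=
  ∑ i : Fin d, ∑ j : Fin d,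
    (E (Matrix.single i j 1)) ⊗ₖ (Matrix.single i j 1)

/-- A quantum channel: completely positive (positive semidefinite Choi matrix)
and trace-preserving. -/
def IsQuantumChannel {d : ℕ}
    (E : Matrix (Fin d) (Fin d) ℂ →ₗ[ℂ] Matrix (Fin d) (Fin d) ℂ) : Prop :=
  (ChoiMatrix E).PosSemidef ∧ ∀ X, (E X).trace = X.trace

theorem aux_choi_apply {d : ℕ}
    (E : Matrix (Fin d) (Fin d) ℂ →ₗ[ℂ] Matrix (Fin d) (Fin d) ℂ) (a i b j : Fin d) :
    ChoiMatrix E (a, i) (b, j) = E (Matrix.single i j 1) a b := by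
  simp only [ChoiMatrix, Matrix.sum_apply, Matrix.kroneckerMap_apply, Matrix.single_apply]
  rw [Finset.sum_eq_single i, Finset.sum_eq_single j]
  · simp
  · intro k _ hk
    simp [hk]
  · simp
  · intro k _ hk
    simp [hk]
  · simp

theorem aux_apply {d : ℕ}
    (E : Matrix (Fin d) (Fin d) ℂ →ₗ[ℂ] Matrix (Fin d) (Fin d) ℂ)
    (X : Matrix (Fin d) (Fin d) ℂ) (a b : Fin d) :
    E X a b = ∑ i, ∑ j, X i j * ChoiMatrix E (a, i) (b, j) := by
  conv_lhs => rw [Matrix.matrix_eq_sum_single X]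
  simp only [map_sum, Matrix.sum_apply, aux_choi_apply]
  refine Finset.sum_congr rfl fun i _ => Finset.sum_congr rfl fun j _ => ?_
  have : Matrix.single i j (X i j) = X i j • Matrix.single i j (1 : ℂ) := by
    simp [Matrix.smul_single]
  rw [this, map_smul]
  simp

/-- `E (B * Bᴴ)` is a sum of compressions of the Choi matrix. -/
theorem aux_pos {d : ℕ}
    (E : Matrix (Fin d) (Fin d) ℂ →ₗ[ℂ] Matrix (Fin d) (Fin d) ℂ)
    (hC : (ChoiMatrix E).PosSemidef) (X : Matrix (Fin d) (Fin d) ℂ) (hX : X.PosSemidef) :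
    (E X).PosSemidef := by
  obtain ⟨B, rfl⟩ : ∃ B : Matrix (Fin d) (Fin d) ℂ, X = Bᴴ * B := by
    open scoped MatrixOrder in
    exact CStarAlgebra.nonneg_iff_eq_star_mul_self.mp hX.nonneg
  have key : E (Bᴴ * B) = ∑ k : Fin d,
      (Matrix.of fun (p : Fin d × Fin d) (b : Fin d) => if p.1 = b then B k p.2 else 0)ᴴ
        * ChoiMatrix E *
      (Matrix.of fun (p : Fin d × Fin d) (b : Fin d) => if p.1 = b then B k p.2 else 0) := by
    ext a b
    rw [aux_apply]
    simp only [Matrix.sum_apply, Matrix.mul_apply, Matrix.conjTranspose_apply, Matrix.of_apply,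
      Fintype.sum_prod_type, Finset.sum_mul, apply_ite star, star_zero, ite_mul, zero_mul,
      mul_ite, mul_zero]
    have h1 : ∀ k, (∑ x, ∑ x_1, if x = b then (∑ x_2, ∑ x_3,
        if x_2 = a then star (B k x_3) * ChoiMatrix E (x_2, x_3) (x, x_1) else 0) * B k x_1
        else 0) = ∑ i, ∑ j, star (B k i) * B k j * ChoiMatrix E (a, i) (b, j) := by
      intro k
      rw [Finset.sum_eq_single b (by intro c _ hc; simp [hc]) (by simp)]
      rw [Finset.sum_comm]
      refine Finset.sum_congr rfl fun j _ => ?_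
      rw [if_pos rfl, Finset.sum_eq_single a (by intro c _ hc; simp [hc]) (by simp),
        Finset.sum_mul]
      refine Finset.sum_congr rfl fun i _ => ?_
      rw [if_pos rfl]; ring
    have h2 : (∑ i, ∑ j, ∑ k, star (B k i) * B k j * ChoiMatrix E (a, i) (b, j)) =
        ∑ k, ∑ i, ∑ j, star (B k i) * B k j * ChoiMatrix E (a, i) (b, j) := by
      rw [Finset.sum_comm (f := fun k i => ∑ j, star (B k i) * B k j *
        ChoiMatrix E (a, i) (b, j))]
      exact Finset.sum_congr rfl fun i _ => Finset.sum_comm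
    rw [h2]
    refine Finset.sum_congr rfl fun k _ => ?_
    rw [← h1]
    simp [Finset.sum_mul]
  rw [key]
  exact Matrix.posSemidef_sum _ fun k _ => hC.conjTranspose_mul_mul_same _

theorem aux_bound {d : ℕ} (X : Matrix (Fin d) (Fin d) ℂ) (hX : X.PosSemidef) (i j : Fin d) :
    ‖X i j‖ ≤ ‖X.trace‖ := by
  obtain ⟨B, rfl⟩ : ∃ B : Matrix (Fin d) (Fin d) ℂ, X = Bᴴ * B := by
    open scoped MatrixOrder in
    exact CStarAlgebra.nonneg_iff_eq_star_mul_self.mp hX.nonneg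
  have ht : (Bᴴ * B).trace = ((∑ k, ∑ l, ‖B k l‖ ^ 2 : ℝ) : ℂ) := by
    simp only [Matrix.trace, Matrix.diag, Matrix.mul_apply, Matrix.conjTranspose_apply]
    rw [Finset.sum_comm]
    push_cast
    refine Finset.sum_congr rfl fun k _ => Finset.sum_congr rfl fun l _ => ?_
    exact Complex.conj_mul' _
  have hn : 0 ≤ ∑ k, ∑ l, ‖B k l‖ ^ 2 := by positivity
  rw [ht, Complex.norm_real, Real.norm_of_nonneg hn, Matrix.mul_apply]
  refine (norm_sum_le _ _).trans (Finset.sum_le_sum fun k _ => ?_)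
  rw [norm_mul, Matrix.conjTranspose_apply, norm_star]
  have hi := Finset.single_le_sum (f := fun l => ‖B k l‖ ^ 2) (fun l _ => by positivity)
    (Finset.mem_univ i)
  have hj := Finset.single_le_sum (f := fun l => ‖B k l‖ ^ 2) (fun l _ => by positivity)
    (Finset.mem_univ j)
  nlinarith [sq_nonneg (‖B k i‖ - ‖B k j‖)]

theorem aux_bounded {d : ℕ}
    (E : Matrix (Fin d) (Fin d) ℂ →ₗ[ℂ] Matrix (Fin d) (Fin d) ℂ)
    (hE : IsQuantumChannel E) (X : Matrix (Fin d) (Fin d) ℂ) :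
    ∃ C : ℝ, ∀ (n : ℕ) (i j : Fin d), ‖(E ^ n) X i j‖ ≤ C := by
  have hspan : X ∈ Submodule.span ℂ {P : Matrix (Fin d) (Fin d) ℂ | P.PosSemidef} := by
    open scoped MatrixOrder Matrix.Norms.L2Operator in
    have h := CStarAlgebra.span_nonneg (A := Matrix (Fin d) (Fin d) ℂ)
    have h2 : {P : Matrix (Fin d) (Fin d) ℂ | P.PosSemidef} =
        {a : Matrix (Fin d) (Fin d) ℂ | 0 ≤ a} := by
      ext P; exact Matrix.nonneg_iff_posSemidef.symm
    rw [h2, h]; trivial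
  induction hspan using Submodule.span_induction with
  | mem P hP =>
    refine ⟨‖P.trace‖, fun n i j => ?_⟩
    have : ((E ^ n) P).PosSemidef ∧ ((E ^ n) P).trace = P.trace := by
      induction n with
      | zero => exact ⟨hP, rfl⟩
      | succ n ih =>
        rw [pow_succ', Module.End.mul_apply]
        exact ⟨aux_pos E hE.1 _ ih.1, (hE.2 _).trans ih.2⟩
    rw [← this.2]
    exact aux_bound _ this.1 i j
  | zero => exact ⟨0, by simp⟩
  | add x y _ _ hx hy =>
    obtain ⟨C, hC⟩ := hx
    obtain ⟨D, hD⟩ := hy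
    refine ⟨C + D, fun n i j => ?_⟩
    rw [map_add, Matrix.add_apply]
    exact (norm_add_le _ _).trans (add_le_add (hC n i j) (hD n i j))
  | smul c x _ hx =>
    obtain ⟨C, hC⟩ := hx
    refine ⟨‖c‖ * C, fun n i j => ?_⟩
    rw [map_smul, Matrix.smul_apply, norm_smul]
    exact mul_le_mul_of_nonneg_left (hC n i j) (norm_nonneg _)

/-- the eigenvalue 1 of a quantum channel is semisimple:
`ker((E - id) ∘ (E - id)) = ker (E - id)`. -/
theorem channel_fixed_point_semisimple {d : ℕ}
    (E : Matrix (Fin d) (Fin d) ℂ →ₗ[ℂ] Matrix (Fin d) (Fin d) ℂ)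
    (hE : IsQuantumChannel E) :
    LinearMap.ker ((E - LinearMap.id) ∘ₗ (E - LinearMap.id)) =
      LinearMap.ker (E - LinearMap.id) := by
  refine le_antisymm (fun X hX => ?_) (LinearMap.ker_le_ker_comp _ _)
  rw [LinearMap.mem_ker, LinearMap.comp_apply] at hX
  rw [LinearMap.mem_ker]
  set Y : Matrix (Fin d) (Fin d) ℂ :=
    (E - (LinearMap.id : Matrix (Fin d) (Fin d) ℂ →ₗ[ℂ] Matrix (Fin d) (Fin d) ℂ)) X with hY
  have hEY : E Y = Y := by
    simpa [sub_eq_zero] using hX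
  have hEX : E X = X + Y := by simp [hY]
  have hpow : ∀ n : ℕ, (E ^ n) X = X + (n : ℂ) • Y := by
    intro n
    induction n with
    | zero => simp
    | succ n ih =>
      rw [pow_succ', Module.End.mul_apply, ih, map_add, map_smul, hEX, hEY]
      push_cast
      module
  obtain ⟨C, hC⟩ := aux_bounded E hE X
  ext i j
  by_contra hne
  have hpos : 0 < ‖Y i j‖ := norm_pos_iff.mpr hne
  obtain ⟨n, hn⟩ := exists_nat_gt ((C + ‖X i j‖) / ‖Y i j‖)
  rw [div_lt_iff₀ hpos] at hn
  have h1 := hC n i j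
  rw [hpow, Matrix.add_apply, Matrix.smul_apply, smul_eq_mul] at h1
  have h2 : ‖(n : ℂ) * Y i j‖ ≤ ‖X i j + n * Y i j‖ + ‖X i j‖ := by
    have := norm_sub_le (X i j + n * Y i j) (X i j)
    simpa using this
  rw [norm_mul, Complex.norm_natCast] at h2
  linarith
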